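/- Fix T > 0, ε > 0, c ≥ 0 and p ∈ (0,1], and let (φᵏ)_{k∈ℕ} be the solution of the directed-chain Riccati system. Then for every t ∈ [0,T], the series ∑_{k=0}^{∞} φᵏ(t) converges and its sum equals 0; equivalently, φ⁰(t) = −∑_{k=1}^{∞} φᵏ(t). -/

import Mathlib

/-!
The generating function of the system at `z = 1` formally satisfies `S' = S²`, `S(T) = 0`, hence
`S = 0`; the content is the convergence of the series and the passage to the limit.

A linear comparison principle run backwards from `T` (`nonpos_of_linear_ode`) shows `φ⁰ ≥ 0` and,
by strong induction, `φᵏ ≤ 0` for `k ≥ 1`, since the terms of `∑ φʲ φ^{k-j}` not involving `φ⁰` are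
products of two nonpositive functions. For `N ≥ 2` the partial sums `S_N = ∑_{k<N} φᵏ` satisfy
`S_N' = S_N² - R_N` with `R_N ≥ 0`, because the truncated Cauchy product is at most `S_N²`
(`sum_cauchy_le_sq`). The comparison principle then gives `S_N ≥ 0`. Thus
`∑_{k≥1} |φᵏ| ≤ φ⁰`: the series converges absolutely, and its sum `L` is nonnegative.
By Mertens' theorem `S_N' → L²` pointwise, and `|S_N'| ≤ (φ⁰)²`, so dominated convergence in
`S_N(t) = -∫_t^T S_N'` yields `L(t) = -∫_t^T L² ≤ 0`, that is `L = 0`.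
-/

open Real

/-- The directed-chain Riccati system with horizon `T`, running-cost weight `ε`,
terminal-cost weight `c` and interaction probability `p`. -/
def DirectedChainRiccati (T ε c p : ℝ) (φ : ℕ → ℝ → ℝ) : Prop :=
  (∀ k, ContDiffOn ℝ 1 (φ k) (Set.Icc 0 T)) ∧
  (∀ t ∈ Set.Icc (0:ℝ) T,
    HasDerivWithinAt (φ 0) ((φ 0 t) ^ 2 - p * ε) (Set.Icc 0 T) t) ∧
  φ 0 T = p * c ∧
  (∀ t ∈ Set.Icc (0:ℝ) T,
    HasDerivWithinAt (φ 1) (2 * φ 0 t * φ 1 t + p * ε) (Set.Icc 0 T) t) ∧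
  φ 1 T = -(p * c) ∧
  (∀ k, 2 ≤ k →
    (∀ t ∈ Set.Icc (0:ℝ) T,
      HasDerivWithinAt (φ k) (∑ j ∈ Finset.range (k + 1), φ j t * φ (k - j) t)
        (Set.Icc 0 T) t) ∧
    φ k T = 0)

open Filter Topology MeasureTheory

/-- Backward comparison principle: multiplying by the integrating factor `exp (-∫ a)` makes `f`
nondecreasing, so `f` stays below its nonpositive terminal value. -/
lemma nonpos_of_linear_ode {T : ℝ} (hT : 0 < T) {f a b : ℝ → ℝ}
    (ha : ContinuousOn a (Set.Icc 0 T))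
    (hf : ∀ t ∈ Set.Icc 0 T, HasDerivWithinAt f (a t * f t + b t) (Set.Icc 0 T) t)
    (hb : ∀ t ∈ Set.Icc 0 T, 0 ≤ b t) (hfT : f T ≤ 0) :
    ∀ t ∈ Set.Icc 0 T, f t ≤ 0 := by
  -- Extending `a` continuously to `ℝ` gives an antiderivative without endpoint issues.
  set a' : ℝ → ℝ := Set.IccExtend hT.le ((Set.Icc 0 T).domRestrict a) with ha'
  have hc : Continuous a' := (continuousOn_iff_continuous_domRestrict.1 ha).Icc_extend'
  have hA : ∀ t, HasDerivAt (fun t => ∫ s in (0 : ℝ)..t, a' s) (a' t) t := fun t =>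
    intervalIntegral.integral_hasDerivAt_right (hc.intervalIntegrable _ _)
      hc.stronglyMeasurable.stronglyMeasurableAtFilter hc.continuousAt
  set A : ℝ → ℝ := fun t => ∫ s in (0 : ℝ)..t, a' s
  have haa : ∀ t ∈ Set.Icc 0 T, a' t = a t := fun t ht => by
    rw [ha', Set.IccExtend_of_mem _ _ ht]; rfl
  have hg : ∀ t ∈ Set.Icc 0 T, HasDerivWithinAt (fun t => f t * Real.exp (-A t))
      (b t * Real.exp (-A t)) (Set.Icc 0 T) t := by
    intro t ht
    have h := (hf t ht).mul ((hA t).neg.exp.hasDerivWithinAt (s := Set.Icc 0 T))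
    refine h.congr_deriv ?_
    rw [haa t ht]
    simp only [Pi.neg_apply]
    ring
  have hmono : MonotoneOn (fun t => f t * Real.exp (-A t)) (Set.Icc 0 T) :=
    monotoneOn_of_hasDerivWithinAt_nonneg (convex_Icc 0 T)
      (fun t ht => (hg t ht).continuousWithinAt)
      (fun t ht => (hg t (interior_subset ht)).mono interior_subset)
      (fun t ht => mul_nonneg (hb t (interior_subset ht)) (Real.exp_pos _).le)
  intro t ht
  have h1 := hmono ht (Set.right_mem_Icc.2 hT.le) ht.2
  simp only at h1
  have h2 : f T * Real.exp (-A T) ≤ 0 := mul_nonpos_of_nonpos_of_nonneg hfT (Real.exp_pos _).le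
  by_contra! h3
  have := mul_pos h3 (Real.exp_pos (-A t))
  linarith

lemma sum_range_antitone {x : ℕ → ℝ} (hx : ∀ k, 1 ≤ k → x k ≤ 0) {m n : ℕ} (hm : 1 ≤ m)
    (hmn : m ≤ n) : ∑ k ∈ Finset.range n, x k ≤ ∑ k ∈ Finset.range m, x k := by
  induction n, hmn using Nat.le_induction with
  | base => rfl
  | succ n hn ih =>
    rw [Finset.sum_range_succ]
    linarith [hx n (hm.trans hn)]

/-- Grouped by the first factor, the difference of the two sides is
`∑_{1 ≤ j < N} xⱼ (S_N - S_{N-j})`, a sum of products of nonpositive numbers. -/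
lemma sum_cauchy_le_sq {x : ℕ → ℝ} (hx : ∀ k, 1 ≤ k → x k ≤ 0) (N : ℕ) :
    ∑ k ∈ Finset.range N, ∑ j ∈ Finset.range (k + 1), x j * x (k - j)
      ≤ (∑ k ∈ Finset.range N, x k) ^ 2 := by
  rw [Finset.sum_range_diag_flip N (fun i j => x i * x j), sq, Finset.sum_mul]
  refine Finset.sum_le_sum fun j hj => ?_
  rw [← Finset.mul_sum]
  rcases Nat.eq_zero_or_pos j with rfl | h
  · simp
  · have := Finset.mem_range.1 hj
    exact mul_le_mul_of_nonpos_left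
      (sum_range_antitone hx (by omega) (Nat.sub_le _ _)) (hx j h)

/-- Each inner sum `S_{N-j}` lies in `[0, x₀]`, and `∑_{1 ≤ j < N} |xⱼ| ≤ x₀`. -/
lemma neg_sq_le_sum_cauchy {x : ℕ → ℝ} (hx : ∀ k, 1 ≤ k → x k ≤ 0)
    (hS : ∀ n, 0 ≤ ∑ k ∈ Finset.range n, x k) (N : ℕ) :
    -(x 0) ^ 2 ≤ ∑ k ∈ Finset.range N, ∑ j ∈ Finset.range (k + 1), x j * x (k - j) := by
  have h0 : 0 ≤ x 0 := by simpa using hS 1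
  rw [Finset.sum_range_diag_flip N (fun i j => x i * x j)]
  simp_rw [← Finset.mul_sum]
  rcases N with _ | N
  · simp; positivity
  rw [Finset.sum_range_succ']
  have h1 : ∑ k ∈ Finset.range N, x (k + 1) * x 0 ≤
      ∑ k ∈ Finset.range N, x (k + 1) * ∑ i ∈ Finset.range (N + 1 - (k + 1)), x i := by
    refine Finset.sum_le_sum fun j hj => ?_
    have := Finset.mem_range.1 hj
    refine mul_le_mul_of_nonpos_left ?_ (hx _ (by omega))
    simpa using sum_range_antitone hx le_rfl (show 1 ≤ N + 1 - (j + 1) by omega)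
  rw [← Finset.sum_mul] at h1
  have h2 := hS (N + 1)
  have h3 := mul_nonneg h0 (hS (N + 1 - 0))
  rw [Finset.sum_range_succ'] at h2
  nlinarith

/-- The equations for `k = 0`, `k = 1` and `k ≥ 2` in a single formula. -/
lemma DirectedChainRiccati.hasDeriv {T ε c p : ℝ} {φ : ℕ → ℝ → ℝ}
    (hφ : DirectedChainRiccati T ε c p φ) (k : ℕ) (t : ℝ) (ht : t ∈ Set.Icc 0 T) :
    HasDerivWithinAt (φ k) (∑ j ∈ Finset.range (k + 1), φ j t * φ (k - j) t +
      (if k = 0 then -(p * ε) else if k = 1 then p * ε else 0)) (Set.Icc 0 T) t := by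
  obtain ⟨-, h0, -, h1, -, h2⟩ := hφ
  rcases k with _ | _ | k
  · refine (h0 t ht).congr_deriv ?_
    simp; ring
  · refine (h1 t ht).congr_deriv ?_
    simp [Finset.sum_range_succ]; ring
  · refine ((h2 (k + 2) (by omega)).1 t ht).congr_deriv ?_
    simp

lemma DirectedChainRiccati.zero_nonneg {T ε c p : ℝ} {φ : ℕ → ℝ → ℝ}
    (hφ : DirectedChainRiccati T ε c p φ) (hT : 0 < T) (hε : 0 < ε) (hc : 0 ≤ c) (hp : 0 < p) :
    ∀ t ∈ Set.Icc 0 T, 0 ≤ φ 0 t := by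
  have h := nonpos_of_linear_ode hT (f := fun t => -φ 0 t) (a := φ 0) (b := fun _ => p * ε)
    (hφ.1 0).continuousOn
    (fun t ht => (hφ.2.1 t ht).neg.congr_deriv (by ring)) (fun _ _ => by positivity)
    (by rw [hφ.2.2.1]; have := mul_nonneg hp.le hc; linarith)
  intro t ht
  linarith [h t ht]

lemma DirectedChainRiccati.nonpos {T ε c p : ℝ} {φ : ℕ → ℝ → ℝ}
    (hφ : DirectedChainRiccati T ε c p φ) (hT : 0 < T) (hε : 0 < ε) (hc : 0 ≤ c) (hp : 0 < p)
    (k : ℕ) (hk : 1 ≤ k) : ∀ t ∈ Set.Icc 0 T, φ k t ≤ 0 := by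
  have hpc := mul_nonneg hp.le hc
  have hcont : ContinuousOn (fun t => 2 * φ 0 t) (Set.Icc 0 T) :=
    continuousOn_const.mul (hφ.1 0).continuousOn
  induction k using Nat.strong_induction_on with
  | _ k ih =>
    obtain ⟨-, h0, -, h1, h1T, h2⟩ := hφ
    obtain rfl | hk2 : k = 1 ∨ 2 ≤ k := by omega
    · exact nonpos_of_linear_ode hT (b := fun _ => p * ε) hcont h1
        (fun _ _ => by positivity) (by rw [h1T]; linarith)
    · obtain ⟨m, rfl⟩ : ∃ m, k = m + 2 := ⟨k - 2, by omega⟩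
      -- The forcing term consists of the products with both indices in `[1, k - 1]`.
      refine nonpos_of_linear_ode hT hcont
        (b := fun t => ∑ j ∈ Finset.range (m + 1), φ (j + 1) t * φ (m + 2 - (j + 1)) t)
        (fun t ht => ((h2 _ hk2).1 t ht).congr_deriv ?_) (fun t ht => ?_) (h2 _ hk2).2.le
      · rw [Finset.sum_range_succ, Finset.sum_range_succ']
        simp only [Nat.sub_self, Nat.sub_zero]
        ring
      · refine Finset.sum_nonneg fun j hj => ?_
        have := Finset.mem_range.1 hj
        exact mul_nonneg_of_nonpos_of_nonpos (ih _ (by omega) (by omega) t ht)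
          (ih _ (by omega) (by omega) t ht)

/-- From two terms on, the constants `-pε` and `pε` cancel. -/
lemma DirectedChainRiccati.hasDeriv_sum {T ε c p : ℝ} {φ : ℕ → ℝ → ℝ}
    (hφ : DirectedChainRiccati T ε c p φ) (n : ℕ) (t : ℝ) (ht : t ∈ Set.Icc 0 T) :
    HasDerivWithinAt (fun t => ∑ k ∈ Finset.range (n + 2), φ k t)
      (∑ k ∈ Finset.range (n + 2), ∑ j ∈ Finset.range (k + 1), φ j t * φ (k - j) t)
      (Set.Icc 0 T) t := by
  refine (HasDerivWithinAt.fun_sum fun k _ => hφ.hasDeriv k t ht).congr_deriv ?_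
  rw [Finset.sum_add_distrib, Finset.sum_range_succ' (fun k => ite (k = 0) _ _),
    Finset.sum_range_succ' (fun k => ite (k + 1 = 0) _ _)]
  simp

lemma DirectedChainRiccati.sum_terminal {T ε c p : ℝ} {φ : ℕ → ℝ → ℝ}
    (hφ : DirectedChainRiccati T ε c p φ) (n : ℕ) :
    ∑ k ∈ Finset.range (n + 2), φ k T = 0 := by
  obtain ⟨-, -, h0, -, h1, h2⟩ := hφ
  rw [Finset.sum_range_succ', Finset.sum_range_succ',
    Finset.sum_eq_zero fun k _ => (h2 (k + 1 + 1) (by omega)).2]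
  simp [h0, h1]

lemma DirectedChainRiccati.sum_nonneg {T ε c p : ℝ} {φ : ℕ → ℝ → ℝ}
    (hφ : DirectedChainRiccati T ε c p φ) (hT : 0 < T) (hε : 0 < ε) (hc : 0 ≤ c) (hp : 0 < p)
    (N : ℕ) : ∀ t ∈ Set.Icc 0 T, 0 ≤ ∑ k ∈ Finset.range N, φ k t := by
  intro t ht
  rcases N with _ | _ | n
  · simp
  · simpa using hφ.zero_nonneg hT hε hc hp t ht
  · have h := nonpos_of_linear_ode hT (f := fun t => -∑ k ∈ Finset.range (n + 2), φ k t)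
      (a := fun t => ∑ k ∈ Finset.range (n + 2), φ k t)
      (b := fun t => (∑ k ∈ Finset.range (n + 2), φ k t) ^ 2 -
        ∑ k ∈ Finset.range (n + 2), ∑ j ∈ Finset.range (k + 1), φ j t * φ (k - j) t)
      (fun t ht => (hφ.hasDeriv_sum n t ht).continuousWithinAt)
      (fun t ht => (hφ.hasDeriv_sum n t ht).neg.congr_deriv (by ring))
      (fun t ht => sub_nonneg.2
        (sum_cauchy_le_sq (fun k hk => hφ.nonpos hT hε hc hp k hk t ht) _))
      (by simp only [hφ.sum_terminal n, neg_zero, le_refl]) t ht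
    linarith

lemma DirectedChainRiccati.summable {T ε c p : ℝ} {φ : ℕ → ℝ → ℝ}
    (hφ : DirectedChainRiccati T ε c p φ) (hT : 0 < T) (hε : 0 < ε) (hc : 0 ≤ c) (hp : 0 < p)
    (t : ℝ) (ht : t ∈ Set.Icc 0 T) : Summable fun k => φ k t := by
  rw [← summable_nat_add_iff 1, ← summable_neg_iff]
  refine summable_of_sum_range_le (c := φ 0 t)
    (fun k => neg_nonneg.2 (hφ.nonpos hT hε hc hp (k + 1) (by omega) t ht)) fun n => ?_
  have h := hφ.sum_nonneg hT hε hc hp (n + 1) t ht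
  rw [Finset.sum_range_succ'] at h
  simp only [Finset.sum_neg_distrib]
  linarith

/-- The integral form `L(t) = -∫_t^T L²` of the limiting equation `L' = L²`, `L(T) = 0`. -/
lemma DirectedChainRiccati.tsum_eq {T ε c p : ℝ} {φ : ℕ → ℝ → ℝ}
    (hφ : DirectedChainRiccati T ε c p φ) (hT : 0 < T) (hε : 0 < ε) (hc : 0 ≤ c) (hp : 0 < p)
    (t : ℝ) (ht : t ∈ Set.Icc 0 T) :
    ∑' k, φ k t = -∫ s in t..T, (∑' k, φ k s) ^ 2 := by
  have hsub : Set.Icc t T ⊆ Set.Icc 0 T := Set.Icc_subset_Icc_left ht.1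
  have hφc : ∀ k, ContinuousOn (φ k) (Set.Icc t T) := fun k => (hφ.1 k).continuousOn.mono hsub
  set C : ℕ → ℝ → ℝ := fun n s =>
    ∑ k ∈ Finset.range (n + 2), ∑ j ∈ Finset.range (k + 1), φ j s * φ (k - j) s with hC
  have hCc : ∀ n, ContinuousOn (C n) (Set.Icc t T) := fun n =>
    continuousOn_finsetSum _ fun k _ => continuousOn_finsetSum _ fun j _ => (hφc j).mul (hφc _)
  have hCi : ∀ n, IntervalIntegrable (C n) volume t T := fun n =>
    (hCc n).intervalIntegrable_of_Icc ht.2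
  have hFTC : ∀ n, ∫ s in t..T, C n s = -∑ k ∈ Finset.range (n + 2), φ k t := by
    intro n
    rw [intervalIntegral.integral_eq_sub_of_hasDerivAt_of_le ht.2
      (f := fun s => ∑ k ∈ Finset.range (n + 2), φ k s)
      (continuousOn_finsetSum _ fun k _ => hφc k) (fun s hs => ?_) (hCi n),
      hφ.sum_terminal n, zero_sub]
    exact (hφ.hasDeriv_sum n s (hsub (Set.Ioo_subset_Icc_self hs))).hasDerivAt
      (Icc_mem_nhds (ht.1.trans_lt hs.1) hs.2)
  have hS := hφ.summable hT hε hc hp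
  have hmem : ∀ s ∈ Set.uIoc t T, s ∈ Set.Icc 0 T := fun s hs => by
    rw [Set.uIoc_of_le ht.2] at hs
    exact hsub (Set.Ioc_subset_Icc_self hs)
  have hlim : Tendsto (fun n => ∫ s in t..T, C n s) atTop
      (𝓝 (∫ s in t..T, (∑' k, φ k s) ^ 2)) := by
    refine intervalIntegral.tendsto_integral_filter_of_dominated_convergence
      (fun s => φ 0 s ^ 2) (Eventually.of_forall fun n => (intervalIntegrable_iff.1 (hCi n)).aestronglyMeasurable)
      (Eventually.of_forall fun n => ae_of_all _ fun s hs => ?_)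
      (((hφc 0).pow 2).intervalIntegrable_of_Icc ht.2) (ae_of_all _ fun s hs => ?_)
    · have hx := fun k hk => hφ.nonpos hT hε hc hp k hk s (hmem s hs)
      have hn := fun n => hφ.sum_nonneg hT hε hc hp n s (hmem s hs)
      rw [Real.norm_eq_abs, abs_le]
      refine ⟨neg_sq_le_sum_cauchy (x := fun k => φ k s) hx hn _,
        (sum_cauchy_le_sq (x := fun k => φ k s) hx _).trans ?_⟩
      refine pow_le_pow_left₀ (hn _) ?_ 2
      simpa using sum_range_antitone (x := fun k => φ k s) hx le_rfl (show 1 ≤ n + 2 by omega)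
    · have h := hasSum_sum_range_mul_of_summable_norm (hS s (hmem s hs)).norm
        (hS s (hmem s hs)).norm
      rw [← sq] at h
      exact (tendsto_add_atTop_iff_nat 2).2 h.tendsto_sum_nat
  simp_rw [hFTC] at hlim
  have h2 := ((tendsto_add_atTop_iff_nat 2).2 (hS t ht).hasSum.tendsto_sum_nat).neg
  rw [← tendsto_nhds_unique h2 hlim, neg_neg]

/-- For the solution of the directed-chain Riccati system, the series `∑ₖ φᵏ(t)`
converges to `0` for every `t ∈ [0,T]`; equivalently `φ⁰(t) = −∑_{k≥1} φᵏ(t)`. -/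
theorem stmt_6 (T ε c p : ℝ) (hT : 0 < T) (hε : 0 < ε) (hc : 0 ≤ c)
    (hp : p ∈ Set.Ioc (0:ℝ) 1)
    (φ : ℕ → ℝ → ℝ) (hφ : DirectedChainRiccati T ε c p φ)
    (t : ℝ) (ht : t ∈ Set.Icc (0:ℝ) T) :
    HasSum (fun k : ℕ => φ k t) 0 ∧ φ 0 t = -∑' k : ℕ, φ (k + 1) t := by
  have hp0 := hp.1
  have hS := hφ.summable hT hε hc hp0 t ht
  have hge : 0 ≤ ∑' k, φ k t :=
    ge_of_tendsto' hS.hasSum.tendsto_sum_nat fun n => hφ.sum_nonneg hT hε hc hp0 n t ht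
  have hle : ∑' k, φ k t ≤ 0 := by
    rw [hφ.tsum_eq hT hε hc hp0 t ht, neg_nonpos]
    exact intervalIntegral.integral_nonneg ht.2 fun _ _ => sq_nonneg _
  have h0 : ∑' k, φ k t = 0 := le_antisymm hle hge
  refine ⟨h0 ▸ hS.hasSum, ?_⟩
  rw [hS.tsum_eq_zero_add] at h0
  linarith
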